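/- Let n ≥ 2 be an integer and 0 < ρ < n(n−1)/2, and let z ∈ ℝⁿ have distinct sorted entries z_1 < z_2 < ⋯ < z_n. For m ∈ {1,…,n} define α(m,n,ρ) = 2ρm/n² + m/n − 1, and let I = {m ∈ {1,…,n} : α(m,n,ρ) > 0}. Then n ∈ I, every m ∈ I satisfies m ≥ 2, and inf_{p ∈ P_{ρ,n}} ∑_{i=1}^n p_i z_i = min_{m ∈ I} [ z̄_m − min( √(α(m,n,ρ)·s_m²), s_m²/(z_m − z̄_m) ) ], where z̄_m and s_m² are the mean and sample variance of the first m entries z_1,…,z_m. -/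

import Mathlib

/-- The χ² uncertainty set `P_{ρ,n}`. -/
def chiSqBall (n : ℕ) (ρ : ℝ) : Set (Fin n → ℝ) :=
  {p | (∀ i, 0 ≤ p i) ∧ (∑ i, p i = 1) ∧ (1/2) * ∑ i, ((n : ℝ) * p i - 1)^2 ≤ ρ}

/-- Mean of a vector. -/
noncomputable def vecMean {n : ℕ} (z : Fin n → ℝ) : ℝ := (∑ i, z i) / n

/-- Biased sample variance of a vector. -/
noncomputable def vecVar {n : ℕ} (z : Fin n → ℝ) : ℝ := (∑ i, (z i - vecMean z)^2) / n

/-- `OPT = inf_{p ∈ P_{ρ,n}} ∑ p_i z_i`. -/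
noncomputable def droOPT (n : ℕ) (ρ : ℝ) (z : Fin n → ℝ) : ℝ :=
  sInf ((fun p => ∑ i, p i * z i) '' chiSqBall n ρ)

/-- Mean of the first `m` entries. -/
noncomputable def meanM {n : ℕ} (z : Fin n → ℝ) (m : ℕ) : ℝ :=
  (∑ i ∈ Finset.univ.filter (fun i : Fin n => (i : ℕ) < m), z i) / m

/-- Biased sample variance of the first `m` entries. -/
noncomputable def varM {n : ℕ} (z : Fin n → ℝ) (m : ℕ) : ℝ :=
  (∑ i ∈ Finset.univ.filter (fun i : Fin n => (i : ℕ) < m), (z i - meanM z m)^2) / m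

/-- `α(m, n, ρ) = 2ρm/n² + m/n − 1`. -/
noncomputable def alphaF (n : ℕ) (ρ : ℝ) (m : ℕ) : ℝ :=
  2 * ρ * m / (n : ℝ)^2 + (m : ℝ) / n - 1

/-- The `m`-th entry `z_m` (1-indexed) of the vector `z`. -/
noncomputable def entry {n : ℕ} (z : Fin n → ℝ) (m : ℕ) : ℝ :=
  if h : m - 1 < n then z ⟨m - 1, h⟩ else 0

open Classical in
/-- The index set `I = {m ∈ {1,…,n} : α(m,n,ρ) > 0}`. -/
noncomputable def droIndex (n : ℕ) (ρ : ℝ) : Finset ℕ :=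
  (Finset.Icc 1 n).filter (fun m => 0 < alphaF n ρ m)

/-!
With `R = (2ρ + n) / n²`, the ball `P_{ρ,n}` consists of the `p` in the simplex with `∑ p_i² ≤ R`,
and `α(m) = R m - 1`. Each candidate value is attained, by weights on the first `m` entries that
decrease affinely in `z_i`, as steeply as nonnegativity and the ball allow. For the lower bound,
Cauchy–Schwarz gives `∑ p_i z_i ≥ c - √(R ∑ (c - z_i)₊²)` for every feasible `p` and every level
`c`. Starting from `z_k` with `k` the least element of `I`, the intermediate value theorem provides
a level `c` at least as large at which the right-hand side is stationary. If exactly the first `m`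
entries are at most `c`, stationarity reads `s_m² = α(m) (c - z̄_m)²`, and the bound becomes
`z̄_m - α(m) (c - z̄_m)`, which is at least the `m`-th candidate.
-/

open Finset
open scoped BigOperators

section SampleMoments

variable {ι : Type*} {s : Finset ι} {z : ι → ℝ}

/-- The biased sample variance of the family `z` over the finite index set `s`; the sample mean is
written `𝔼 i ∈ s, z i`. -/
noncomputable def sampleVariance (s : Finset ι) (z : ι → ℝ) : ℝ :=
  𝔼 i ∈ s, (z i - 𝔼 j ∈ s, z j) ^ 2

lemma sum_sub_eq_card_mul (s : Finset ι) (z : ι → ℝ) (x : ℝ) :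
    ∑ i ∈ s, (x - z i) = #s * (x - 𝔼 i ∈ s, z i) := by
  rw [sum_sub_distrib, sum_const, nsmul_eq_mul, mul_sub, card_mul_expect]

lemma sum_sub_sq_eq_card_mul (s : Finset ι) (z : ι → ℝ) (x : ℝ) :
    ∑ i ∈ s, (x - z i) ^ 2 = #s * (sampleVariance s z + (x - 𝔼 i ∈ s, z i) ^ 2) := by
  set μ := 𝔼 i ∈ s, z i with hμ
  have hvar : ∑ i ∈ s, (z i - μ) ^ 2 = #s * sampleVariance s z := (card_mul_expect s _).symm
  have hdev : ∑ i ∈ s, (μ - z i) = 0 := by rw [sum_sub_eq_card_mul, hμ, sub_self, mul_zero]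
  calc ∑ i ∈ s, (x - z i) ^ 2
      = ∑ i ∈ s, ((z i - μ) ^ 2 + 2 * (x - μ) * (μ - z i) + (x - μ) ^ 2) :=
        sum_congr rfl fun i _ => by ring
    _ = ∑ i ∈ s, (z i - μ) ^ 2 + 2 * (x - μ) * ∑ i ∈ s, (μ - z i) + #s * (x - μ) ^ 2 := by
        rw [sum_add_distrib, sum_add_distrib, ← mul_sum, sum_const, nsmul_eq_mul]
    _ = #s * (sampleVariance s z + (x - μ) ^ 2) := by rw [hvar, hdev]; ring

lemma sampleVariance_nonneg (s : Finset ι) (z : ι → ℝ) : 0 ≤ sampleVariance s z :=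
  expect_nonneg fun _ _ => sq_nonneg _

lemma sampleVariance_pos {k : ι} (hk : k ∈ s) (hz : 𝔼 i ∈ s, z i ≠ z k) :
    0 < sampleVariance s z :=
  expect_pos' (fun _ _ => sq_nonneg _) ⟨k, hk, sq_pos_of_ne_zero (sub_ne_zero.2 hz.symm)⟩

end SampleMoments

section TiltedWeights

variable {ι : Type*} {s : Finset ι} {z : ι → ℝ} {t : ℝ}

open scoped Classical in
/-- The uniform weights on `s`, tilted towards the small values of `z` with slope `t`. Weights of
this form minimise a weighted sum of `z` under a bound on the sum of squares. -/
noncomputable def tiltedWeights (s : Finset ι) (z : ι → ℝ) (t : ℝ) (i : ι) : ℝ :=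
  if i ∈ s then (1 + t * (𝔼 j ∈ s, z j - z i)) / #s else 0

lemma tiltedWeights_nonneg (h : ∀ i ∈ s, t * (z i - 𝔼 j ∈ s, z j) ≤ 1) (i : ι) :
    0 ≤ tiltedWeights s z t i := by
  unfold tiltedWeights
  split_ifs with hi
  · exact div_nonneg (by linarith [h i hi]) (Nat.cast_nonneg _)
  · exact le_rfl

variable [Fintype ι]

lemma sum_tiltedWeights (hs : s.Nonempty) : ∑ i, tiltedWeights s z t i = 1 := by
  have hcard : (#s : ℝ) ≠ 0 := by exact_mod_cast hs.card_ne_zero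
  simp only [tiltedWeights, sum_ite_mem, univ_inter]
  rw [← sum_div, sum_add_distrib, ← mul_sum, sum_sub_eq_card_mul, sub_self, mul_zero, mul_zero,
    add_zero, sum_const, nsmul_eq_mul, mul_one, div_self hcard]

lemma sum_tiltedWeights_sq (s : Finset ι) (z : ι → ℝ) (t : ℝ) :
    ∑ i, tiltedWeights s z t i ^ 2 = (1 + t ^ 2 * sampleVariance s z) / #s := by
  set μ := 𝔼 j ∈ s, z j with hμ
  calc ∑ i, tiltedWeights s z t i ^ 2
      = ∑ i ∈ s, ((1 + t * (μ - z i)) / #s) ^ 2 := by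
        simp only [tiltedWeights, ite_pow, zero_pow two_ne_zero, sum_ite_mem, univ_inter, hμ]
    _ = ∑ i ∈ s, (1 + 2 * t * (μ - z i) + t ^ 2 * (μ - z i) ^ 2) / (#s : ℝ) ^ 2 :=
        sum_congr rfl fun i _ => by rw [div_pow]; ring
    _ = (#s + t ^ 2 * (#s * sampleVariance s z)) / (#s : ℝ) ^ 2 := by
        rw [← sum_div, sum_add_distrib, sum_add_distrib, ← mul_sum, ← mul_sum,
          sum_sub_eq_card_mul, sum_sub_sq_eq_card_mul, ← hμ, sum_const, nsmul_eq_mul]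
        ring
    _ = (1 + t ^ 2 * sampleVariance s z) / #s := by field_simp

lemma sum_tiltedWeights_mul (hs : s.Nonempty) :
    ∑ i, tiltedWeights s z t i * z i = 𝔼 i ∈ s, z i - t * sampleVariance s z := by
  have hcard : (#s : ℝ) ≠ 0 := by exact_mod_cast hs.card_ne_zero
  set μ := 𝔼 i ∈ s, z i with hμ
  calc ∑ i, tiltedWeights s z t i * z i
      = ∑ i ∈ s, (1 + t * (μ - z i)) / #s * z i := by
        simp only [tiltedWeights, ite_mul, zero_mul, sum_ite_mem, univ_inter, hμ]
    _ = ∑ i ∈ s, (μ + (t * μ - 1) * (μ - z i) - t * (μ - z i) ^ 2) / #s :=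
        sum_congr rfl fun i _ => by ring
    _ = (#s * μ - t * (#s * sampleVariance s z)) / #s := by
        rw [← sum_div, sum_sub_distrib, sum_add_distrib, ← mul_sum, ← mul_sum,
          sum_sub_eq_card_mul, sum_sub_sq_eq_card_mul, ← hμ, sum_const, nsmul_eq_mul]
        ring
    _ = μ - t * sampleVariance s z := by field_simp

lemma exists_mem_stdSimplex_sum_mul_eq_sub {β d : ℝ} (hs : s.Nonempty)
    (hvar : 0 < sampleVariance s z) (hd_sq : d ^ 2 ≤ β * sampleVariance s z)
    (hd : ∀ i ∈ s, d * (z i - 𝔼 j ∈ s, z j) ≤ sampleVariance s z) :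
    ∃ p ∈ stdSimplex ℝ ι, ∑ i, p i ^ 2 ≤ (1 + β) / #s ∧
      ∑ i, p i * z i = 𝔼 i ∈ s, z i - d := by
  set v := sampleVariance s z
  refine ⟨tiltedWeights s z (d / v), ⟨tiltedWeights_nonneg fun i hi => ?_,
    sum_tiltedWeights hs⟩, ?_, ?_⟩
  · rw [div_mul_eq_mul_div, div_le_one hvar]
    exact hd i hi
  · have hslope : (d / v) ^ 2 * v ≤ β := by
      rw [div_pow, div_mul_eq_mul_div, div_le_iff₀ (by positivity)]
      nlinarith
    rw [sum_tiltedWeights_sq]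
    gcongr
  · rw [sum_tiltedWeights_mul hs, div_mul_cancel₀ d hvar.ne']

end TiltedWeights

section WeakDuality

variable {ι : Type*} [Fintype ι] {s : Finset ι} {p z : ι → ℝ} {R c : ℝ}

lemma sub_sqrt_mul_sum_posPart_sq_le (hp : p ∈ stdSimplex ℝ ι) (hpR : ∑ i, p i ^ 2 ≤ R) (c : ℝ) :
    c - √(R * ∑ i, (c - z i)⁺ ^ 2) ≤ ∑ i, p i * z i := by
  have hcentre : ∑ i, p i * z i = c - ∑ i, p i * (c - z i) := by
    simp only [mul_sub, sum_sub_distrib, ← sum_mul, hp.2, one_mul, sub_sub_cancel]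
  have hcauchy : ∑ i, p i * (c - z i) ≤ √(R * ∑ i, (c - z i)⁺ ^ 2) :=
    calc ∑ i, p i * (c - z i)
        ≤ ∑ i, p i * (c - z i)⁺ :=
          sum_le_sum fun i _ => mul_le_mul_of_nonneg_left (le_posPart _) (hp.1 i)
      _ ≤ √(R * ∑ i, (c - z i)⁺ ^ 2) := by
          refine Real.le_sqrt_of_sq_le ((sum_mul_sq_le_sq_mul_sq _ _ _).trans ?_)
          gcongr
  rw [hcentre]
  gcongr

/-- A function of the level `c` with the sign of the derivative of the dual objective
`c ↦ c - √(R * ∑ i, (c - z i)⁺ ^ 2)`; its zeros are the stationary levels. -/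
def dualSlope (R : ℝ) (z : ι → ℝ) (c : ℝ) : ℝ :=
  ∑ i, (c - z i)⁺ ^ 2 - R * (∑ i, (c - z i)⁺) ^ 2

lemma sub_mul_sum_posPart_le_of_dualSlope_eq_zero (hp : p ∈ stdSimplex ℝ ι)
    (hpR : ∑ i, p i ^ 2 ≤ R) (hc : dualSlope R z c = 0) :
    c - R * ∑ i, (c - z i)⁺ ≤ ∑ i, p i * z i := by
  have hR : 0 ≤ R := (sum_nonneg fun i _ => sq_nonneg (p i)).trans hpR
  have hsqrt : √(R * ∑ i, (c - z i)⁺ ^ 2) = R * ∑ i, (c - z i)⁺ := by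
    rw [sub_eq_zero.1 hc, ← mul_assoc, ← sq, ← mul_pow,
      Real.sqrt_sq (mul_nonneg hR (sum_nonneg fun i _ => posPart_nonneg _))]
  rw [← hsqrt]
  exact sub_sqrt_mul_sum_posPart_sq_le hp hpR c

lemma continuous_dualSlope (R : ℝ) (z : ι → ℝ) : Continuous (dualSlope R z) := by
  unfold dualSlope
  simp only [posPart_def]
  fun_prop

lemma sum_posPart_sub_pow_eq {k : ℕ} (hk : k ≠ 0) (hle : ∀ i ∈ s, z i ≤ c)
    (hge : ∀ i ∉ s, c ≤ z i) : ∑ i, (c - z i)⁺ ^ k = ∑ i ∈ s, (c - z i) ^ k := by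
  rw [← sum_subset (subset_univ s)]
  · exact sum_congr rfl fun i hi => by rw [posPart_of_nonneg (sub_nonneg.2 (hle i hi))]
  · exact fun i _ hi => by rw [posPart_of_nonpos (sub_nonpos.2 (hge i hi)), zero_pow hk]

lemma sum_posPart_sub_eq_card_mul (hle : ∀ i ∈ s, z i ≤ c) (hge : ∀ i ∉ s, c ≤ z i) :
    ∑ i, (c - z i)⁺ = #s * (c - 𝔼 i ∈ s, z i) := by
  have hsum := sum_posPart_sub_pow_eq one_ne_zero hle hge
  simp only [pow_one] at hsum
  rw [hsum, sum_sub_eq_card_mul]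

lemma dualSlope_eq_card_mul (hle : ∀ i ∈ s, z i ≤ c) (hge : ∀ i ∉ s, c ≤ z i) :
    dualSlope R z c =
      #s * (sampleVariance s z - (R * #s - 1) * (c - 𝔼 i ∈ s, z i) ^ 2) := by
  rw [dualSlope, sum_posPart_sub_pow_eq two_ne_zero hle hge, sum_posPart_sub_eq_card_mul hle hge,
    sum_sub_sq_eq_card_mul]
  ring

lemma dualSlope_nonneg (hR : R * #s ≤ 1) (hle : ∀ i ∈ s, z i ≤ c) (hge : ∀ i ∉ s, c ≤ z i) :
    0 ≤ dualSlope R z c := by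
  rw [dualSlope_eq_card_mul hle hge]
  have := mul_nonneg (sub_nonneg.2 hR) (sq_nonneg (c - 𝔼 i ∈ s, z i))
  exact mul_nonneg (Nat.cast_nonneg _) (by linarith [sampleVariance_nonneg s z])

lemma exists_ge_dualSlope_nonpos (hR : 1 < R * Fintype.card ι) (z : ι → ℝ) (a : ℝ) :
    ∃ b ≥ a, dualSlope R z b ≤ 0 := by
  obtain ⟨M, hM⟩ := Finite.exists_le z
  set μ := 𝔼 i, z i
  set v := sampleVariance univ z
  have hα : 0 < R * Fintype.card ι - 1 := sub_pos.2 hR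
  set b := max (max a M) (μ + √(v / (R * Fintype.card ι - 1)))
  have hMb : M ≤ b := (le_max_right a M).trans (le_max_left _ _)
  have hroot : √(v / (R * Fintype.card ι - 1)) ≤ b - μ := le_sub_iff_add_le'.2 (le_max_right _ _)
  have hvb : v ≤ (b - μ) ^ 2 * (R * Fintype.card ι - 1) :=
    (div_le_iff₀ hα).1 (Real.sqrt_le_iff.1 hroot).2
  refine ⟨b, (le_max_left a M).trans (le_max_left _ _), ?_⟩
  rw [dualSlope_eq_card_mul (s := univ) (fun i _ => (hM i).trans hMb)
    (fun i hi => absurd (mem_univ i) hi), card_univ]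
  exact mul_nonpos_of_nonneg_of_nonpos (Nat.cast_nonneg _) (by linarith)

lemma exists_ge_dualSlope_eq_zero {a : ℝ} (hR : 1 < R * Fintype.card ι)
    (ha : 0 ≤ dualSlope R z a) : ∃ c ≥ a, dualSlope R z c = 0 := by
  obtain ⟨b, hab, hb⟩ := exists_ge_dualSlope_nonpos hR z a
  obtain ⟨c, hc, hzero⟩ :=
    intermediate_value_Icc' hab (continuous_dualSlope R z).continuousOn ⟨hb, ha⟩
  exact ⟨c, hc.1, hzero⟩

lemma mul_le_min_sqrt_div {α g x v : ℝ} (hg : 0 < g) (hgx : g ≤ x) (hα : 0 ≤ α)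
    (hv : α * x ^ 2 ≤ v) : α * x ≤ min √(α * v) (v / g) := by
  have hx : 0 ≤ x := hg.le.trans hgx
  refine le_min (Real.le_sqrt_of_sq_le ?_) ((le_div_iff₀ hg).2 ?_)
  · calc (α * x) ^ 2 = α * (α * x ^ 2) := by ring
      _ ≤ α * v := by gcongr
  · calc α * x * g ≤ α * x * x := by gcongr
      _ = α * x ^ 2 := by ring
      _ ≤ v := hv

lemma expect_sub_min_le_sum_mul {y : ℝ} (hp : p ∈ stdSimplex ℝ ι) (hpR : ∑ i, p i ^ 2 ≤ R)
    (hR : 1 ≤ R * #s) (hle : ∀ i ∈ s, z i ≤ c) (hge : ∀ i ∉ s, c ≤ z i)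
    (hc : dualSlope R z c = 0) (hy : 𝔼 i ∈ s, z i < y) (hyc : y ≤ c) :
    𝔼 i ∈ s, z i - min √((R * #s - 1) * sampleVariance s z)
      (sampleVariance s z / (y - 𝔼 i ∈ s, z i)) ≤ ∑ i, p i * z i := by
  set μ := 𝔼 i ∈ s, z i
  set v := sampleVariance s z
  have hcard : (#s : ℝ) ≠ 0 := fun h => by norm_num [h] at hR
  have hstat : v = (R * #s - 1) * (c - μ) ^ 2 := by
    rw [dualSlope_eq_card_mul hle hge] at hc
    exact sub_eq_zero.1 ((mul_eq_zero.1 hc).resolve_left hcard)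
  calc μ - min √((R * #s - 1) * v) (v / (y - μ))
      ≤ μ - (R * #s - 1) * (c - μ) :=
        sub_le_sub_left (mul_le_min_sqrt_div (sub_pos.2 hy) (sub_le_sub_right hyc μ)
          (sub_nonneg.2 hR) hstat.ge) μ
    _ = c - R * ∑ i, (c - z i)⁺ := by rw [sum_posPart_sub_eq_card_mul hle hge]; ring
    _ ≤ ∑ i, p i * z i := sub_mul_sum_posPart_le_of_dualSlope_eq_zero hp hpR hc

end WeakDuality

section FirstEntries

variable {n m : ℕ} {z : Fin n → ℝ}

/-- The (zero-based) indices of the first `m` entries of a vector of length `n`. -/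
def firstIndices (n m : ℕ) : Finset (Fin n) :=
  univ.filter fun i => (i : ℕ) < m

lemma mem_firstIndices {i : Fin n} : i ∈ firstIndices n m ↔ (i : ℕ) < m := by
  simp [firstIndices]

lemma card_firstIndices (hm : m ≤ n) : #(firstIndices n m) = m := by
  rw [firstIndices, Fin.card_filter_val_lt, min_eq_right hm]

lemma meanM_eq_expect (hm : m ≤ n) : meanM z m = 𝔼 i ∈ firstIndices n m, z i := by
  rw [expect_eq_sum_div_card, card_firstIndices hm, meanM, firstIndices]

lemma varM_eq_sampleVariance (hm : m ≤ n) : varM z m = sampleVariance (firstIndices n m) z := by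
  rw [sampleVariance, expect_eq_sum_div_card, card_firstIndices hm, ← meanM_eq_expect hm, varM,
    firstIndices]

lemma entry_val_add_one (z : Fin n → ℝ) (k : Fin n) : entry z (k + 1) = z k := by
  simp [entry]

lemma exists_fin_val_add_one_eq (hm1 : 1 ≤ m) (hmn : m ≤ n) : ∃ k : Fin n, m = k + 1 :=
  ⟨⟨m - 1, by omega⟩, by simp only; omega⟩

lemma meanM_one (hn : 1 ≤ n) (z : Fin n → ℝ) : meanM z 1 = entry z 1 := by
  have hfirst : firstIndices n 1 = {⟨0, hn⟩} := by
    ext i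
    simp [mem_firstIndices, Fin.ext_iff]
  rw [meanM_eq_expect hn, hfirst, expect_singleton]
  exact (entry_val_add_one z ⟨0, hn⟩).symm

lemma le_entry_of_mem_firstIndices (hz : Monotone z) (hmn : m ≤ n) {i : Fin n}
    (hi : i ∈ firstIndices n m) : z i ≤ entry z m := by
  rw [mem_firstIndices] at hi
  obtain ⟨k, rfl⟩ := exists_fin_val_add_one_eq (by omega) hmn
  rw [entry_val_add_one]
  exact hz (Fin.le_def.2 (by omega))

lemma meanM_lt_entry (hz : StrictMono z) (hm2 : 2 ≤ m) (hmn : m ≤ n) :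
    meanM z m < entry z m := by
  rw [meanM_eq_expect hmn]
  refine expect_lt (fun i hi => le_entry_of_mem_firstIndices hz.monotone hmn hi)
    ⟨⟨0, by omega⟩, mem_firstIndices.2 (by simp only; omega), ?_⟩
  obtain ⟨k, rfl⟩ := exists_fin_val_add_one_eq (by omega) hmn
  rw [entry_val_add_one]
  exact hz (Fin.lt_def.2 (by simp only; omega))

lemma varM_pos (hm1 : 1 ≤ m) (hmn : m ≤ n) (hmean : meanM z m ≠ entry z m) : 0 < varM z m := by
  obtain ⟨k, rfl⟩ := exists_fin_val_add_one_eq hm1 hmn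
  rw [entry_val_add_one, meanM_eq_expect hmn] at hmean
  rw [varM_eq_sampleVariance hmn]
  exact sampleVariance_pos (mem_firstIndices.2 (Nat.lt_succ_self k)) hmean

lemma exists_mem_firstIndices_iff_le (hz : Monotone z) (c : ℝ) :
    ∃ m ≤ n, ∀ i, i ∈ firstIndices n m ↔ z i ≤ c := by
  classical
  let P (m : ℕ) : Prop := ∀ i ∈ firstIndices n m, z i ≤ c
  have hP0 : P 0 := fun i hi => absurd (mem_firstIndices.1 hi) (Nat.not_lt_zero _)
  refine ⟨Nat.findGreatest P n, Nat.findGreatest_le n,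
    fun i => ⟨Nat.findGreatest_spec (Nat.zero_le n) hP0 i, fun hi => ?_⟩⟩
  have hPi : P (i + 1) := fun j hj =>
    (hz (Fin.le_def.2 (Nat.lt_succ_iff.1 (mem_firstIndices.1 hj)))).trans hi
  exact mem_firstIndices.2 (Nat.le_findGreatest i.2 hPi)

end FirstEntries

section ChiSquareBall

variable {n m : ℕ} {ρ : ℝ} {z : Fin n → ℝ}

/-- The bound `R` on `∑ i, p i ^ 2` that cuts the ball `P_{ρ,n}` out of the simplex. -/
noncomputable def sqRadius (n : ℕ) (ρ : ℝ) : ℝ :=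
  (2 * ρ + n) / (n : ℝ) ^ 2

lemma mem_chiSqBall_iff {p : Fin n → ℝ} :
    p ∈ chiSqBall n ρ ↔ p ∈ stdSimplex ℝ (Fin n) ∧ ∑ i, p i ^ 2 ≤ sqRadius n ρ := by
  have hball (hp : ∑ i, p i = 1) :
      (1 / 2) * ∑ i, ((n : ℝ) * p i - 1) ^ 2 ≤ ρ ↔ ∑ i, p i ^ 2 ≤ sqRadius n ρ := by
    have hn : n ≠ 0 := by rintro rfl; simp at hp
    have hexpand : ∑ i, ((n : ℝ) * p i - 1) ^ 2 = (n : ℝ) ^ 2 * ∑ i, p i ^ 2 - n :=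
      calc ∑ i, ((n : ℝ) * p i - 1) ^ 2
          = ∑ i, ((n : ℝ) ^ 2 * p i ^ 2 - 2 * n * p i + 1) := sum_congr rfl fun i _ => by ring
        _ = (n : ℝ) ^ 2 * ∑ i, p i ^ 2 - n := by
            rw [sum_add_distrib, sum_sub_distrib, ← mul_sum, ← mul_sum, hp, sum_const, card_univ,
              Fintype.card_fin, nsmul_eq_mul]
            ring
    rw [hexpand, sqRadius, le_div_iff₀ (by positivity)]
    constructor <;> intro h <;> linarith
  exact ⟨fun ⟨hnonneg, hsum, h⟩ => ⟨⟨hnonneg, hsum⟩, (hball hsum).1 h⟩,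
    fun ⟨⟨hnonneg, hsum⟩, h⟩ => ⟨hnonneg, hsum, (hball hsum).2 h⟩⟩

lemma alphaF_eq_sqRadius_mul_sub_one (n : ℕ) (ρ : ℝ) (m : ℕ) :
    alphaF n ρ m = sqRadius n ρ * m - 1 := by
  unfold alphaF sqRadius
  rcases eq_or_ne n 0 with rfl | hn
  · simp
  · field_simp

lemma mem_droIndex_iff : m ∈ droIndex n ρ ↔ (1 ≤ m ∧ m ≤ n) ∧ 1 < sqRadius n ρ * m := by
  rw [droIndex, mem_filter, mem_Icc, alphaF_eq_sqRadius_mul_sub_one, sub_pos]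

lemma one_le_and_le_of_mem_droIndex (hm : m ∈ droIndex n ρ) : 1 ≤ m ∧ m ≤ n :=
  mem_Icc.1 (mem_filter.1 hm).1

lemma self_mem_droIndex (hn : 1 ≤ n) (hρ : 0 < ρ) : n ∈ droIndex n ρ := by
  refine mem_droIndex_iff.2 ⟨⟨hn, le_rfl⟩, ?_⟩
  rw [sqRadius, div_mul_eq_mul_div, one_lt_div (by positivity), sq]
  gcongr
  linarith

lemma two_le_of_mem_droIndex (hρ : ρ ≤ (n : ℝ) * (n - 1) / 2) (hm : m ∈ droIndex n ρ) :
    2 ≤ m := by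
  have hmn := one_le_and_le_of_mem_droIndex hm
  have hn : n ≠ 0 := by omega
  have hR : sqRadius n ρ ≤ 1 := (div_le_one (by positivity)).2 (by linarith)
  by_contra! hlt
  obtain rfl : m = 1 := by omega
  have := (mem_droIndex_iff.1 hm).2
  norm_num at this
  linarith

/-- The value `z̄_m - min(√(α(m) s_m²), s_m² / (z_m - z̄_m))` attached to the prefix of length
`m`, over which the theorem minimises. -/
noncomputable def prefixValue (n : ℕ) (ρ : ℝ) (z : Fin n → ℝ) (m : ℕ) : ℝ :=
  meanM z m - min √(alphaF n ρ m * varM z m) (varM z m / (entry z m - meanM z m))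

lemma exists_mem_chiSqBall_sum_mul_eq_prefixValue (hz : Monotone z) (hm : m ∈ droIndex n ρ)
    (hgap : meanM z m < entry z m) :
    ∃ p ∈ chiSqBall n ρ, ∑ i, p i * z i = prefixValue n ρ z m := by
  obtain ⟨hm1, hmn⟩ := one_le_and_le_of_mem_droIndex hm
  have hα : 0 < alphaF n ρ m := (mem_filter.1 hm).2
  have hvar : 0 < varM z m := varM_pos hm1 hmn hgap.ne
  set d := min √(alphaF n ρ m * varM z m) (varM z m / (entry z m - meanM z m))
  have hd : 0 ≤ d := le_min (Real.sqrt_nonneg _) (div_nonneg hvar.le (sub_nonneg.2 hgap.le))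
  have hd_sq : d ^ 2 ≤ alphaF n ρ m * varM z m :=
    (Real.le_sqrt hd (by positivity)).1 (min_le_left _ _)
  have hd_entry : d * (entry z m - meanM z m) ≤ varM z m :=
    (le_div_iff₀ (sub_pos.2 hgap)).1 (min_le_right _ _)
  have hd_gap (i) (hi : i ∈ firstIndices n m) : d * (z i - meanM z m) ≤ varM z m :=
    (mul_le_mul_of_nonneg_left (sub_le_sub_right (le_entry_of_mem_firstIndices hz hmn hi) _)
      hd).trans hd_entry
  rw [varM_eq_sampleVariance hmn] at hvar hd_sq
  simp only [varM_eq_sampleVariance hmn, meanM_eq_expect hmn] at hd_gap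
  obtain ⟨p, hp, hpsq, hpz⟩ := exists_mem_stdSimplex_sum_mul_eq_sub
    (card_pos.1 (by rwa [card_firstIndices hmn])) hvar hd_sq hd_gap
  refine ⟨p, mem_chiSqBall_iff.2 ⟨hp, hpsq.trans_eq ?_⟩, ?_⟩
  · have hm0 : (m : ℝ) ≠ 0 := by positivity
    rw [card_firstIndices hmn, alphaF_eq_sqRadius_mul_sub_one, add_sub_cancel,
      mul_div_cancel_right₀ _ hm0]
  · rw [hpz, ← meanM_eq_expect hmn, prefixValue]

lemma mem_droIndex_of_le {k : ℕ} (hm : m ∈ droIndex n ρ) (hmk : m ≤ k) (hkn : k ≤ n) :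
    k ∈ droIndex n ρ := by
  obtain ⟨⟨hm1, -⟩, hα⟩ := mem_droIndex_iff.1 hm
  have hR : 0 < sqRadius n ρ := pos_of_mul_pos_left (one_pos.trans hα) (Nat.cast_nonneg m)
  refine mem_droIndex_iff.2 ⟨⟨hm1.trans hmk, hkn⟩, hα.trans_le ?_⟩
  gcongr

lemma dualSlope_entry_min'_nonneg (hz : Monotone z) (hI : (droIndex n ρ).Nonempty) :
    0 ≤ dualSlope (sqRadius n ρ) z (entry z ((droIndex n ρ).min' hI)) := by
  obtain ⟨hm1, hmn⟩ := one_le_and_le_of_mem_droIndex (min'_mem _ hI)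
  obtain ⟨k, hk⟩ := exists_fin_val_add_one_eq hm1 hmn
  have hk_notMem : (k : ℕ) ∉ droIndex n ρ := fun h => by
    have := min'_le _ _ h
    omega
  have hRk : sqRadius n ρ * k ≤ 1 := by
    rcases Nat.eq_zero_or_pos (k : ℕ) with hk0 | hk0
    · simp [hk0]
    · by_contra! hlt
      exact hk_notMem (mem_droIndex_iff.2 ⟨⟨hk0, k.2.le⟩, hlt⟩)
  have hle (i) (hi : i ∈ firstIndices n k) : z i ≤ z k :=
    hz (Fin.le_def.2 (mem_firstIndices.1 hi).le)
  have hge (i) (hi : i ∉ firstIndices n k) : z k ≤ z i :=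
    hz (Fin.le_def.2 (not_lt.1 (mt mem_firstIndices.2 hi)))
  rw [hk, entry_val_add_one]
  exact dualSlope_nonneg (by rwa [card_firstIndices k.2.le]) hle hge

lemma exists_mem_droIndex_dualSlope_eq_zero (hn : 1 ≤ n) (hρ : 0 < ρ) (hz : Monotone z) :
    ∃ m ∈ droIndex n ρ, ∃ c, dualSlope (sqRadius n ρ) z c = 0 ∧
      ∀ i, i ∈ firstIndices n m ↔ z i ≤ c := by
  have hself := self_mem_droIndex hn hρ
  have hI : (droIndex n ρ).Nonempty := ⟨n, hself⟩
  have hR := (mem_droIndex_iff.1 hself).2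
  obtain ⟨c, hac, hc⟩ := exists_ge_dualSlope_eq_zero (by rwa [Fintype.card_fin])
    (dualSlope_entry_min'_nonneg hz hI)
  obtain ⟨m, hmn, hm⟩ := exists_mem_firstIndices_iff_le hz c
  have hmin := min'_mem _ hI
  obtain ⟨hl1, hln⟩ := one_le_and_le_of_mem_droIndex hmin
  obtain ⟨k, hk⟩ := exists_fin_val_add_one_eq hl1 hln
  rw [hk, entry_val_add_one] at hac
  have hkm := mem_firstIndices.1 ((hm k).2 hac)
  exact ⟨m, mem_droIndex_of_le hmin (by omega) hmn, c, hc, hm⟩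

lemma exists_mem_droIndex_prefixValue_le (hn : 1 ≤ n) (hρ : 0 < ρ) (hz : Monotone z)
    (hgap : ∀ m ∈ droIndex n ρ, meanM z m < entry z m) :
    ∃ m ∈ droIndex n ρ, ∀ p ∈ chiSqBall n ρ, prefixValue n ρ z m ≤ ∑ i, p i * z i := by
  obtain ⟨m, hm, c, hc, hlevel⟩ := exists_mem_droIndex_dualSlope_eq_zero hn hρ hz
  refine ⟨m, hm, fun p hp => ?_⟩
  obtain ⟨hp, hpR⟩ := mem_chiSqBall_iff.1 hp
  obtain ⟨⟨hm1, hmn⟩, hα⟩ := mem_droIndex_iff.1 hm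
  have hentry : entry z m ≤ c := by
    obtain ⟨k, rfl⟩ := exists_fin_val_add_one_eq hm1 hmn
    rw [entry_val_add_one]
    exact (hlevel k).1 (mem_firstIndices.2 (Nat.lt_succ_self k))
  have hgap_m := hgap m hm
  rw [meanM_eq_expect hmn] at hgap_m
  rw [← card_firstIndices hmn] at hα
  have hbound := expect_sub_min_le_sum_mul hp hpR hα.le (fun i => (hlevel i).1)
    (fun i hi => (not_le.1 (mt (hlevel i).2 hi)).le) hc hgap_m hentry
  rwa [card_firstIndices hmn, ← alphaF_eq_sqRadius_mul_sub_one, ← meanM_eq_expect hmn,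
    ← varM_eq_sampleVariance hmn] at hbound

end ChiSquareBall

theorem stmt3_general (n : ℕ) (hn : 1 ≤ n) (ρ : ℝ) (hρ : 0 < ρ) (z : Fin n → ℝ) (hz : Monotone z)
    (hgap : ∀ m ∈ droIndex n ρ, meanM z m < entry z m) :
    n ∈ droIndex n ρ ∧
      (∀ m ∈ droIndex n ρ, 2 ≤ m) ∧
      ∀ hI : (droIndex n ρ).Nonempty,
        droOPT n ρ z = (droIndex n ρ).inf' hI (fun m =>
          meanM z m - min (Real.sqrt (alphaF n ρ m * varM z m))
            (varM z m / (entry z m - meanM z m))) := by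
  refine ⟨self_mem_droIndex hn hρ, fun m hm => ?_, fun hI => ?_⟩
  · have hm1 : m ≠ 1 := fun h => (hgap m hm).ne (by rw [h, meanM_one hn])
    have := one_le_and_le_of_mem_droIndex hm
    omega
  have hattained (k) (hk : k ∈ droIndex n ρ) :=
    exists_mem_chiSqBall_sum_mul_eq_prefixValue hz hk (hgap k hk)
  obtain ⟨m, hm, hlower⟩ := exists_mem_droIndex_prefixValue_le hn hρ hz hgap
  have hleast : IsLeast ((fun p => ∑ i, p i * z i) '' chiSqBall n ρ) (prefixValue n ρ z m) :=
    ⟨hattained m hm, Set.forall_mem_image.2 hlower⟩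
  change sInf _ = (droIndex n ρ).inf' hI (prefixValue n ρ z)
  rw [hleast.csInf_eq]
  refine le_antisymm (le_inf' _ _ fun k hk => ?_) (inf'_le _ hm)
  obtain ⟨p, hp, hpk⟩ := hattained k hk
  exact hpk ▸ hlower p hp

theorem stmt3 (n : ℕ) (hn : 2 ≤ n) (ρ : ℝ) (hρ0 : 0 < ρ)
    (hρ : ρ < (n : ℝ) * ((n : ℝ) - 1) / 2)
    (z : Fin n → ℝ) (hz : StrictMono z) :
    n ∈ droIndex n ρ ∧
      (∀ m ∈ droIndex n ρ, 2 ≤ m) ∧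
      ∀ hI : (droIndex n ρ).Nonempty,
        droOPT n ρ z = (droIndex n ρ).inf' hI (fun m =>
          meanM z m - min (Real.sqrt (alphaF n ρ m * varM z m))
            (varM z m / (entry z m - meanM z m))) :=
  stmt3_general n (by omega) ρ hρ0 z hz.monotone fun _ hm =>
    meanM_lt_entry hz (two_le_of_mem_droIndex hρ.le hm) (one_le_and_le_of_mem_droIndex hm).2
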